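/- (Sharp two-point tail) Let X₁, X₂ be independent uniform random points on the ellipsoid E = {(x₁,x₂,x₃) : x₁² + x₂² + x₃²/a² ≤ 1} with 0 < a < 1, and set W₁₂ = 2 − ‖X₁ − X₂‖. Then ε^{−7/2}·P(W₁₂ ≤ ε) → (9/(32π))·I_a as ε ↓ 0, where I_a = ∫_A 1{(s+s')/2 + τ²/4 − (a²/4)(y−y')² ≤ 1} ds ds' dy dy' dτ and A = {(s,s',y,y',τ) : s,s' ≥ 0, y² ≤ s, (y')² ≤ s'}. -/

import Mathlib

open Real MeasureTheory ProbabilityTheory Filter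

def Ell (a : ℝ) : Set (EuclideanSpace ℝ (Fin 3)) :=
  {x | x 0 ^ 2 + x 1 ^ 2 + x 2 ^ 2 / a ^ 2 ≤ 1}

noncomputable def unifE (a : ℝ) : Measure (EuclideanSpace ℝ (Fin 3)) :=
  (volume (Ell a))⁻¹ • volume.restrict (Ell a)

noncomputable def Gfun (a : ℝ) (p : ℝ × ℝ × ℝ × ℝ × ℝ) : ℝ :=
  (p.1 + p.2.1) / 2 + p.2.2.2.2 ^ 2 / 4 - a ^ 2 / 4 * (p.2.2.1 - p.2.2.2.1) ^ 2

def Aset : Set (ℝ × ℝ × ℝ × ℝ × ℝ) :=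
  {p | 0 ≤ p.1 ∧ 0 ≤ p.2.1 ∧ p.2.2.1 ^ 2 ≤ p.1 ∧ p.2.2.2.1 ^ 2 ≤ p.2.1}

/-!
A pair of points of the ellipsoid at distance at least `2 - ε` consists of two nearly antipodal
points near the equator. In the cylindrical coordinates `r ^ 2 = 1 - ε s`, `z = a √ε y`, with
`√ε τ` the deviation of the two polar angles from being antipodal, membership in the ellipsoid
reads `y ^ 2 ≤ s`, and the squared distance is `4 - 4 ε G(s, s', y, y', τ) + o(ε)`, so that being at
distance at least `2 - ε` becomes `G ≤ 1` in the limit. The two points contribute Jacobians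
`a ε √ε / 2` each, the angular deviation contributes `√ε`, and the remaining angle integrates to
`2 π` by rotational invariance; this gives the factor `(π / 2) a ^ 2 ε ^ (7 / 2)`, to be divided by
the square of the volume `4 π a / 3` of the ellipsoid. Since `(y - y') ^ 2 ≤ 2 (s + s')` and
`a < 1`, the gain in squared distance due to the heights never compensates the loss due to the
radii, so all rescaled regions lie in one fixed box and dominated convergence applies.
-/

open Set
open scoped ENNReal Topology

section LebesgueIntegral

theorem setLIntegral_comp_mul_left {c : ℝ} (hc : c ≠ 0) (f : ℝ → ℝ≥0∞) (s : Set ℝ) :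
    ∫⁻ x in s, f x = ENNReal.ofReal |c| * ∫⁻ x in (fun x ↦ c * x) ⁻¹' s, f (c * x) := by
  have hemb : MeasurableEmbedding fun x : ℝ ↦ c * x :=
    (Homeomorph.mulLeft₀ c hc).measurableEmbedding
  rw [← hemb.lintegral_map, ← hemb.restrict_map, ← smul_eq_mul, ← lintegral_smul_measure,
    ← Measure.restrict_smul, Real.smul_map_volume_mul_left hc]

theorem lintegral_comp_mul_left {c : ℝ} (hc : c ≠ 0) (f : ℝ → ℝ≥0∞) :
    ∫⁻ x, f x = ENNReal.ofReal |c| * ∫⁻ x, f (c * x) := by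
  simpa using setLIntegral_comp_mul_left hc f univ

theorem setLIntegral_Ioc_comp_add_eq_of_periodic {f : ℝ → ℝ≥0∞} {T : ℝ} (hT : 0 < T)
    (hf : Function.Periodic f T) (c t u : ℝ) :
    ∫⁻ x in Ioc t (t + T), f (x + c) = ∫⁻ x in Ioc u (u + T), f x := by
  have hpre : (fun x ↦ x + c) ⁻¹' Ioc (t + c) (t + c + T) = Ioc t (t + T) := by
    rw [preimage_add_const_Ioc]
    congr 1 <;> ring
  rw [← hpre, (measurePreserving_add_right volume c).setLIntegral_comp_preimage_emb
    (MeasurableEquiv.addRight c).measurableEmbedding]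
  refine (isAddFundamentalDomain_Ioc hT (t + c)).setLIntegral_eq
    (isAddFundamentalDomain_Ioc hT u) f fun g x ↦ ?_
  obtain ⟨n, hn⟩ := AddSubgroup.mem_zmultiples_iff.1 g.2
  rw [AddSubgroup.vadd_def, ← hn, vadd_eq_add, add_comm, hf.zsmul n x]

theorem setLIntegral_Ioo_comp_neg_cos_sub (f : ℝ → ℝ≥0∞) (θ : ℝ) :
    ∫⁻ t in Ioo (-π) π, f (-cos (θ - t)) = ∫⁻ φ in Ioo (-π) π, f (cos φ) := by
  have hπ : Ioc (-π) π = Ioc (-π) (-π + 2 * π) := by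
    rw [neg_add_eq_sub, two_mul, add_sub_cancel_right]
  have hcos (t : ℝ) : -cos (θ - t) = cos (t + (π - θ)) := by
    rw [← cos_neg (θ - t), ← cos_add_pi]
    congr 1
    ring
  simp only [hcos, setLIntegral_congr Ioo_ae_eq_Ioc, hπ]
  exact setLIntegral_Ioc_comp_add_eq_of_periodic (f := fun φ ↦ f (cos φ)) two_pi_pos
    (cos_periodic.comp f) (π - θ) (-π) (-π)

theorem setLIntegral_Ioi_ofReal_mul_eq_setLIntegral_Iio_sqrt {ε : ℝ} (hε : 0 < ε) (f : ℝ → ℝ≥0∞) :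
    ∫⁻ r in Ioi 0, ENNReal.ofReal r * f r =
      ENNReal.ofReal (ε / 2) * ∫⁻ s in Iio ε⁻¹, f √(1 - ε * s) := by
  have himage : (fun r : ℝ ↦ (1 - r ^ 2) / ε) '' Ioi 0 = Iio ε⁻¹ := by
    ext s
    simp only [mem_image, mem_Ioi, mem_Iio, inv_eq_one_div, lt_div_iff₀ hε, mul_comm s]
    constructor
    · rintro ⟨r, hr, rfl⟩
      rw [mul_div_cancel₀ _ hε.ne']
      exact sub_lt_self _ (by positivity)
    · intro hs
      refine ⟨√(1 - ε * s), Real.sqrt_pos.2 (sub_pos.2 hs), ?_⟩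
      rw [Real.sq_sqrt (sub_pos.2 hs).le, sub_sub_cancel, mul_div_cancel_left₀ _ hε.ne']
  have hderiv : ∀ r ∈ Ioi (0 : ℝ),
      HasDerivWithinAt (fun r : ℝ ↦ (1 - r ^ 2) / ε) (-(2 * r) / ε) (Ioi 0) r := fun r _ ↦ by
    simpa using (((hasDerivAt_pow 2 r).const_sub 1).div_const ε).hasDerivWithinAt
  have hanti : AntitoneOn (fun r : ℝ ↦ (1 - r ^ 2) / ε) (Ioi 0) := fun x hx y _ hxy ↦ by
    have : 0 ≤ x := le_of_lt hx
    dsimp only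
    gcongr
  rw [← himage, lintegral_image_eq_lintegral_deriv_mul_of_antitoneOn measurableSet_Ioi hderiv hanti,
    ← lintegral_const_mul' _ _ ENNReal.ofReal_ne_top]
  refine setLIntegral_congr_fun measurableSet_Ioi fun r (hr : 0 < r) ↦ ?_
  have hjac : ε / 2 * -(-(2 * r) / ε) = r := by field_simp
  have hdepth : √(1 - ε * ((1 - r ^ 2) / ε)) = r := by
    rw [mul_div_cancel₀ _ hε.ne', sub_sub_cancel, Real.sqrt_sq hr.le]
  simp only [← mul_assoc, ← ENNReal.ofReal_mul (half_pos hε).le, hjac, hdepth]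

theorem lintegral_prod_prod_prod_swap {α β γ δ : Type*} [MeasurableSpace α] [MeasurableSpace β]
    [MeasurableSpace γ] [MeasurableSpace δ] {μ : Measure α} {ν : Measure β} {ρ : Measure γ}
    {σ : Measure δ} [SFinite ν] [SFinite ρ] [SFinite σ] {f : α × β × γ × δ → ℝ≥0∞}
    (hf : Measurable f) :
    ∫⁻ p, f p ∂μ.prod (ν.prod (ρ.prod σ)) =
      ∫⁻ x, ∫⁻ z, ∫⁻ y, ∫⁻ w, f (x, y, z, w) ∂σ ∂ν ∂ρ ∂μ := by
  rw [lintegral_prod _ hf.aemeasurable]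
  refine lintegral_congr fun x ↦ ?_
  rw [lintegral_prod _ (by fun_prop)]
  have hinner (y : β) : ∫⁻ q, f (x, y, q) ∂ρ.prod σ = ∫⁻ z, ∫⁻ w, f (x, y, z, w) ∂σ ∂ρ :=
    lintegral_prod _ (by fun_prop)
  simp only [hinner]
  refine lintegral_lintegral_swap (Measurable.aemeasurable ?_)
  exact Measurable.lintegral_prod_right' (f := fun q : (β × γ) × δ ↦ f (x, q.1.1, q.1.2, q.2))
    (by fun_prop)

theorem volume_preserving_euclideanSpace_fin_three :
    MeasurePreserving fun q : (ℝ × ℝ) × ℝ ↦ (!₂[q.1.1, q.1.2, q.2] : EuclideanSpace ℝ (Fin 3)) := by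
  have hpi := (volume_preserving_piFinSuccAbove (fun _ : Fin 3 ↦ ℝ) 2).symm.comp
    (((MeasurePreserving.id (volume : Measure ℝ)).prod (volume_preserving_finTwoArrow ℝ).symm).comp
      Measure.measurePreserving_swap)
  convert! (PiLp.volume_preserving_toLp (Fin 3)).comp hpi using 1
  ext q i
  fin_cases i <;> rfl

theorem lintegral_cylindrical {f : EuclideanSpace ℝ (Fin 3) → ℝ≥0∞} (hf : Measurable f) :
    ∫⁻ x, f x = ∫⁻ r in Ioi 0, ENNReal.ofReal r *
      ∫⁻ z, ∫⁻ θ in Ioo (-π) π, f !₂[r * cos θ, r * sin θ, z] := by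
  have hvec := volume_preserving_euclideanSpace_fin_three
  have hg : Measurable fun q : (ℝ × ℝ) × ℝ ↦ f !₂[q.1.1, q.1.2, q.2] := hf.comp hvec.measurable
  have hpolar : Measurable fun q : ℝ × ℝ ↦
      ENNReal.ofReal q.1 * ∫⁻ z, f !₂[q.1 * cos q.2, q.1 * sin q.2, z] :=
    (ENNReal.measurable_ofReal.comp measurable_fst).mul <| hg.lintegral_prod_right'.comp
      (f := fun q : ℝ × ℝ ↦ (q.1 * cos q.2, q.1 * sin q.2)) (by fun_prop)
  rw [← hvec.lintegral_comp hf, Measure.volume_eq_prod, lintegral_prod _ hg.aemeasurable,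
    ← lintegral_comp_polarCoord_symm, polarCoord_target, Measure.volume_eq_prod,
    ← Measure.prod_restrict]
  simp only [polarCoord_symm_apply, smul_eq_mul]
  rw [lintegral_prod _ hpolar.aemeasurable]
  refine lintegral_congr fun r ↦ ?_
  rw [lintegral_const_mul' _ _ ENNReal.ofReal_ne_top, lintegral_lintegral_swap]
  refine (hg.comp (f := fun q : ℝ × ℝ ↦ ((r * cos q.1, r * sin q.1), q.2)) ?_).aemeasurable
  fun_prop

end LebesgueIntegral

section CapCoordinates

/-- The point of `ℝ³` with rescaled cylindrical coordinates `(s, y, θ)`: its squared distance to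
the third axis is `1 - ε s`, its height is `a √ε y` and its polar angle is `θ`. Pairs at distance
`2 - O(ε)` have bounded `s` and `y`. Only `s ≤ ε⁻¹` is meaningful. -/
noncomputable def capPoint (a ε s y θ : ℝ) : EuclideanSpace ℝ (Fin 3) :=
  !₂[√(1 - ε * s) * cos θ, √(1 - ε * s) * sin θ, a * √ε * y]

/-- The squared distance between two points `capPoint a ε s y θ` and `capPoint a ε s' y' θ'`,
where `c` stands for `-cos (θ - θ')`, which is `1` for antipodal polar angles. -/
noncomputable def capDistSq (a ε s s' y y' c : ℝ) : ℝ :=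
  (1 - ε * s) + (1 - ε * s') + 2 * (√(1 - ε * s) * √(1 - ε * s')) * c + a ^ 2 * ε * (y - y') ^ 2

theorem lintegral_capPoint {a ε : ℝ} (ha : 0 < a) (hε : 0 < ε)
    {f : EuclideanSpace ℝ (Fin 3) → ℝ≥0∞} (hf : Measurable f) :
    ∫⁻ x, f x = ENNReal.ofReal (a * ε * √ε / 2) *
      ∫⁻ s in Iio ε⁻¹, ∫⁻ y, ∫⁻ θ in Ioo (-π) π, f (capPoint a ε s y θ) := by
  have hscale : 0 < a * √ε := mul_pos ha (Real.sqrt_pos.2 hε)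
  rw [lintegral_cylindrical hf, setLIntegral_Ioi_ofReal_mul_eq_setLIntegral_Iio_sqrt hε,
    show a * ε * √ε / 2 = ε / 2 * |a * √ε| by rw [abs_of_pos hscale]; ring,
    ENNReal.ofReal_mul (half_pos hε).le, mul_assoc,
    ← lintegral_const_mul' (ENNReal.ofReal |a * √ε|) _ ENNReal.ofReal_ne_top]
  congr 1
  exact lintegral_congr fun s ↦ lintegral_comp_mul_left hscale.ne' _

theorem capPoint_mem_Ell {a ε s : ℝ} (ha : a ≠ 0) (hε : 0 < ε) (hs : ε * s ≤ 1) (y θ : ℝ) :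
    capPoint a ε s y θ ∈ Ell a ↔ y ^ 2 ≤ s := by
  have hform : (√(1 - ε * s) * cos θ) ^ 2 + (√(1 - ε * s) * sin θ) ^ 2 +
      (a * √ε * y) ^ 2 / a ^ 2 = 1 + ε * (y ^ 2 - s) := by
    simp only [mul_pow, Real.sq_sqrt (sub_nonneg.2 hs), Real.sq_sqrt hε.le, sin_sq]
    field_simp
    ring
  change _ + _ + _ / _ ≤ (1 : ℝ) ↔ _
  simp only [capPoint, PiLp.toLp_apply, Matrix.cons_val]
  rw [hform, add_le_iff_nonpos_right, ← not_lt, mul_pos_iff_of_pos_left hε, not_lt, sub_nonpos]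

theorem norm_capPoint_sub_sq {a ε s s' : ℝ} (hε : 0 ≤ ε) (hs : ε * s ≤ 1) (hs' : ε * s' ≤ 1)
    (y y' θ θ' : ℝ) :
    ‖capPoint a ε s y θ - capPoint a ε s' y' θ'‖ ^ 2 =
      capDistSq a ε s s' y y' (-cos (θ - θ')) := by
  have h := Real.sq_sqrt (sub_nonneg.2 hs)
  have h' := Real.sq_sqrt (sub_nonneg.2 hs')
  rw [EuclideanSpace.real_norm_sq_eq, Fin.sum_univ_three, capDistSq, cos_sub]
  simp only [capPoint, PiLp.sub_apply, Matrix.cons_val]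
  linear_combination √(1 - ε * s) ^ 2 * sin_sq_add_cos_sq θ +
    √(1 - ε * s') ^ 2 * sin_sq_add_cos_sq θ' + h + h' + a ^ 2 * (y - y') ^ 2 * Real.sq_sqrt hε

end CapCoordinates

section FarPairs

/-- The pairs of points of the ellipsoid `Ell a` at distance at least `2 - ε`. -/
def farPairs (a ε : ℝ) : Set (EuclideanSpace ℝ (Fin 3) × EuclideanSpace ℝ (Fin 3)) :=
  Ell a ×ˢ Ell a ∩ {q | 2 - ‖q.1 - q.2‖ ≤ ε}

/-- The coordinates `(s, s', y, y', c)`, in the sense of `capDistSq`, of the pairs of points of the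
ellipsoid at distance at least `2 - ε`. -/
def farCoords (a ε : ℝ) : Set (ℝ × ℝ × ℝ × ℝ × ℝ) :=
  {p | p.2.2.1 ^ 2 ≤ p.1 ∧ p.2.2.2.1 ^ 2 ≤ p.2.1 ∧
    (2 - ε) ^ 2 ≤ capDistSq a ε p.1 p.2.1 p.2.2.1 p.2.2.2.1 p.2.2.2.2}

/-- The rescaled coordinates `(s, s', y, y', τ)` of the pairs of points of the ellipsoid at distance
at least `2 - ε`, where `√ε τ` is the deviation of the two polar angles from being antipodal.
As `ε` tends to `0` this region converges to `{p ∈ Aset | Gfun a p ≤ 1}`. -/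
def rescaledFar (a ε : ℝ) : Set (ℝ × ℝ × ℝ × ℝ × ℝ) :=
  {p | (p.1, p.2.1, p.2.2.1, p.2.2.2.1, cos (√ε * p.2.2.2.2)) ∈ farCoords a ε} ∩
    Iio ε⁻¹ ×ˢ Iio ε⁻¹ ×ˢ univ ×ˢ univ ×ˢ ((fun τ ↦ √ε * τ) ⁻¹' Ioo (-π) π)

theorem mul_lt_one_of_mem_Iio_inv {ε s : ℝ} (hε : 0 < ε) (hs : s ∈ Iio ε⁻¹) : ε * s < 1 :=
  (lt_inv_mul_iff₀ hε).1 (by rwa [mul_one])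

theorem measurableSet_Ell (a : ℝ) : MeasurableSet (Ell a) :=
  measurableSet_le (by fun_prop) measurable_const

theorem measurableSet_setOf_two_sub_norm_sub_le (ε : ℝ) :
    MeasurableSet {q : EuclideanSpace ℝ (Fin 3) × EuclideanSpace ℝ (Fin 3) |
      2 - ‖q.1 - q.2‖ ≤ ε} :=
  measurableSet_le (by fun_prop) measurable_const

theorem measurableSet_farPairs (a ε : ℝ) : MeasurableSet (farPairs a ε) :=
  ((measurableSet_Ell a).prod (measurableSet_Ell a)).inter
    (measurableSet_setOf_two_sub_norm_sub_le ε)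

theorem measurableSet_farCoords (a ε : ℝ) : MeasurableSet (farCoords a ε) := by
  simp only [farCoords, capDistSq, ofPred_and]
  refine .inter ?_ (.inter ?_ ?_) <;> exact measurableSet_le (by fun_prop) (by fun_prop)

theorem measurableSet_setOf_cos_mem_farCoords (a ε : ℝ) :
    MeasurableSet {p : ℝ × ℝ × ℝ × ℝ × ℝ |
      (p.1, p.2.1, p.2.2.1, p.2.2.2.1, cos (√ε * p.2.2.2.2)) ∈ farCoords a ε} :=
  measurableSet_preimage (by fun_prop) (measurableSet_farCoords a ε)

theorem measurableSet_rescaledFar (a ε : ℝ) : MeasurableSet (rescaledFar a ε) :=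
  (measurableSet_setOf_cos_mem_farCoords a ε).inter <| measurableSet_Iio.prod <|
    measurableSet_Iio.prod <| MeasurableSet.univ.prod <| MeasurableSet.univ.prod <|
    measurableSet_preimage (by fun_prop) measurableSet_Ioo

theorem capPoint_mem_farPairs {a ε s s' : ℝ} (ha : a ≠ 0) (hε : 0 < ε) (hε2 : ε ≤ 2)
    (hs : ε * s ≤ 1) (hs' : ε * s' ≤ 1) (y y' θ θ' : ℝ) :
    (capPoint a ε s y θ, capPoint a ε s' y' θ') ∈ farPairs a ε ↔
      (s, s', y, y', -cos (θ - θ')) ∈ farCoords a ε := by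
  simp only [farPairs, farCoords, mem_inter_iff, mem_prod, mem_ofPred_eq, and_assoc,
    capPoint_mem_Ell ha hε hs, capPoint_mem_Ell ha hε hs', ← norm_capPoint_sub_sq hε.le hs hs']
  rw [pow_le_pow_iff_left₀ (sub_nonneg.2 hε2) (norm_nonneg _) two_ne_zero, sub_le_comm]

theorem volume_preimage_mk_capPoint_farPairs {a ε s : ℝ} (ha : 0 < a) (hε : 0 < ε) (hε2 : ε ≤ 2)
    (hs : ε * s ≤ 1) (y θ : ℝ) :
    volume (Prod.mk (capPoint a ε s y θ) ⁻¹' farPairs a ε) =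
      ENNReal.ofReal (a * ε ^ 2 / 2) * ∫⁻ s' in Iio ε⁻¹, ∫⁻ y',
        ∫⁻ τ in (fun τ ↦ √ε * τ) ⁻¹' Ioo (-π) π,
          (farCoords a ε).indicator 1 (s, s', y, y', cos (√ε * τ)) := by
  have hslice := measurable_prodMk_left (x := capPoint a ε s y θ) (measurableSet_farPairs a ε)
  have hangle (s' : ℝ) (hs' : s' ∈ Iio ε⁻¹) (y' : ℝ) :
      ∫⁻ θ' in Ioo (-π) π, (Prod.mk (capPoint a ε s y θ) ⁻¹' farPairs a ε).indicator 1
          (capPoint a ε s' y' θ') =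
        ENNReal.ofReal √ε * ∫⁻ τ in (fun τ ↦ √ε * τ) ⁻¹' Ioo (-π) π,
          (farCoords a ε).indicator 1 (s, s', y, y', cos (√ε * τ)) := by
    have hscale := setLIntegral_comp_mul_left (Real.sqrt_pos.2 hε).ne'
      (fun φ ↦ (farCoords a ε).indicator 1 (s, s', y, y', cos φ)) (Ioo (-π) π)
    rw [abs_of_nonneg (Real.sqrt_nonneg ε)] at hscale
    rw [← hscale, ← setLIntegral_Ioo_comp_neg_cos_sub
      (fun c ↦ (farCoords a ε).indicator 1 (s, s', y, y', c)) θ]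
    exact lintegral_congr fun θ' ↦ indicator_const_eq_indicator_const <|
      capPoint_mem_farPairs ha.ne' hε hε2 hs (mul_lt_one_of_mem_Iio_inv hε hs').le y y' θ θ'
  have hconst : a * ε ^ 2 / 2 = a * ε * √ε / 2 * √ε := by
    linear_combination -(a * ε / 2) * Real.sq_sqrt hε.le
  rw [← lintegral_indicator_one hslice, lintegral_capPoint ha hε (measurable_one.indicator hslice),
    hconst, ENNReal.ofReal_mul (by positivity), mul_assoc (ENNReal.ofReal _),
    ← lintegral_const_mul' (ENNReal.ofReal √ε) _ ENNReal.ofReal_ne_top]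
  congr 1
  refine setLIntegral_congr_fun measurableSet_Iio fun s' hs' ↦ ?_
  rw [← lintegral_const_mul' _ _ ENNReal.ofReal_ne_top]
  exact lintegral_congr (hangle s' hs')

theorem volume_rescaledFar (a ε : ℝ) :
    volume (rescaledFar a ε) =
      ∫⁻ s in Iio ε⁻¹, ∫⁻ y, ∫⁻ s' in Iio ε⁻¹, ∫⁻ y',
        ∫⁻ τ in (fun τ ↦ √ε * τ) ⁻¹' Ioo (-π) π,
          (farCoords a ε).indicator 1 (s, s', y, y', cos (√ε * τ)) := by
  have hfar := measurableSet_setOf_cos_mem_farCoords a ε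
  have hind := (measurable_one (α := ℝ≥0∞)).indicator hfar
  rw [rescaledFar, ← Measure.restrict_apply hfar, ← lintegral_indicator_one hfar]
  simp only [Measure.volume_eq_prod, ← Measure.prod_restrict, Measure.restrict_univ]
  rw [lintegral_prod_prod_prod_swap hind]
  refine lintegral_congr fun s ↦ lintegral_congr fun y ↦ lintegral_congr fun s' ↦ ?_
  exact lintegral_prod _ (by fun_prop)

theorem volume_farPairs {a ε : ℝ} (ha : 0 < a) (hε : 0 < ε) (hε2 : ε ≤ 2) :
    volume (farPairs a ε) =
      ENNReal.ofReal (π / 2 * a ^ 2 * ε ^ (7 / 2 : ℝ)) * volume (rescaledFar a ε) := by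
  have hfar := measurableSet_farPairs a ε
  have hslices (s : ℝ) (hs : s ∈ Iio ε⁻¹) :
      ∫⁻ y, ∫⁻ θ in Ioo (-π) π, volume (Prod.mk (capPoint a ε s y θ) ⁻¹' farPairs a ε) =
        ENNReal.ofReal (a * ε ^ 2 / 2) * ENNReal.ofReal (2 * π) * ∫⁻ y, ∫⁻ s' in Iio ε⁻¹, ∫⁻ y',
          ∫⁻ τ in (fun τ ↦ √ε * τ) ⁻¹' Ioo (-π) π,
            (farCoords a ε).indicator 1 (s, s', y, y', cos (√ε * τ)) := by
    simp only [volume_preimage_mk_capPoint_farPairs ha hε hε2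
      (mul_lt_one_of_mem_Iio_inv hε hs).le, setLIntegral_const, Real.volume_Ioo, sub_neg_eq_add,
      ← two_mul, mul_right_comm]
    exact lintegral_const_mul' _ _ (by finiteness)
  have hpow : ε ^ (7 / 2 : ℝ) = ε ^ 3 * √ε := by
    rw [Real.sqrt_eq_rpow, ← Real.rpow_natCast, ← Real.rpow_add hε]
    norm_num
  have hconst : π / 2 * a ^ 2 * ε ^ (7 / 2 : ℝ) =
      a * ε * √ε / 2 * (a * ε ^ 2 / 2 * (2 * π)) := by
    rw [hpow]
    ring
  rw [Measure.volume_eq_prod, Measure.prod_apply hfar,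
    lintegral_capPoint ha hε (measurable_measure_prodMk_left hfar),
    setLIntegral_congr_fun measurableSet_Iio hslices, lintegral_const_mul' _ _ (by finiteness),
    ← volume_rescaledFar, hconst, ENNReal.ofReal_mul (p := a * ε * √ε / 2) (by positivity),
    ENNReal.ofReal_mul (p := a * ε ^ 2 / 2) (by positivity)]
  ring

end FarPairs

section Limits

theorem one_sub_cos_eq_sq_mul_sinc_sq (x : ℝ) : 1 - cos x = x ^ 2 / 2 * sinc (x / 2) ^ 2 := by
  rcases eq_or_ne x 0 with rfl | hx
  · simp
  · have hcos : cos x = 1 - 2 * sin (x / 2) ^ 2 := by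
      rw [← cos_sq_add_sin_sq (x / 2), ← mul_div_cancel₀ x two_ne_zero, cos_two_mul']
      ring_nf
    rw [hcos, sinc_of_ne_zero (div_ne_zero hx two_ne_zero)]
    field_simp
    ring

theorem tendsto_one_sub_cos_sqrt_div (τ : ℝ) :
    Tendsto (fun ε ↦ (1 - cos (√ε * τ)) / ε) (𝓝[>] 0) (𝓝 (τ ^ 2 / 2)) := by
  have hcont : Continuous fun ε ↦ τ ^ 2 / 2 * sinc (√ε * τ / 2) ^ 2 := by fun_prop
  have hlim : Tendsto (fun ε ↦ τ ^ 2 / 2 * sinc (√ε * τ / 2) ^ 2) (𝓝[>] 0) (𝓝 (τ ^ 2 / 2)) := by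
    simpa using hcont.continuousWithinAt.tendsto (x := 0) (s := Ioi 0)
  refine hlim.congr' ?_
  filter_upwards [self_mem_nhdsWithin] with ε (hε : 0 < ε)
  rw [one_sub_cos_eq_sq_mul_sinc_sq, mul_pow, Real.sq_sqrt hε.le]
  field_simp

theorem tendsto_one_sub_sqrt_mul_sqrt_div (s s' : ℝ) :
    Tendsto (fun ε ↦ (1 - √(1 - ε * s) * √(1 - ε * s')) / ε) (𝓝[>] 0) (𝓝 ((s + s') / 2)) := by
  have hroot (s : ℝ) : HasDerivAt (fun ε : ℝ ↦ √(1 - ε * s)) (-s / 2) 0 := by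
    simpa using (((hasDerivAt_id (0 : ℝ)).mul_const s).const_sub 1).sqrt (by simp)
  have hderiv : HasDerivAt (fun ε : ℝ ↦ 1 - √(1 - ε * s) * √(1 - ε * s')) ((s + s') / 2) 0 := by
    refine (((hroot s).mul (hroot s')).const_sub 1).congr_deriv ?_
    simp only [zero_mul, sub_zero, Real.sqrt_one]
    ring
  simpa [div_eq_inv_mul] using hderiv.tendsto_slope_zero_right

theorem tendsto_four_sub_capDistSq_div (a s s' y y' τ : ℝ) :
    Tendsto (fun ε ↦ (4 - capDistSq a ε s s' y y' (cos (√ε * τ))) / ε) (𝓝[>] 0)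
      (𝓝 (4 * Gfun a (s, s', y, y', τ))) := by
  have hcont : Continuous fun ε : ℝ ↦ √(1 - ε * s) * √(1 - ε * s') := by fun_prop
  have hroots : Tendsto (fun ε : ℝ ↦ √(1 - ε * s) * √(1 - ε * s')) (𝓝[>] 0) (𝓝 1) := by
    simpa using hcont.continuousWithinAt.tendsto (x := 0) (s := Ioi 0)
  have hlim := (((tendsto_one_sub_sqrt_mul_sqrt_div s s').const_mul 2).add
    ((hroots.mul (tendsto_one_sub_cos_sqrt_div τ)).const_mul 2)).add_const
      (s + s' - a ^ 2 * (y - y') ^ 2)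
  have hG : 4 * Gfun a (s, s', y, y', τ) =
      2 * ((s + s') / 2) + 2 * (1 * (τ ^ 2 / 2)) + (s + s' - a ^ 2 * (y - y') ^ 2) := by
    simp only [Gfun]
    ring
  rw [hG]
  refine hlim.congr' ?_
  filter_upwards [self_mem_nhdsWithin] with ε (hε : 0 < ε)
  simp only [capDistSq]
  field_simp
  ring

theorem eventually_le_const_iff_of_tendsto_of_ne {ι α : Type*} [LinearOrder α] [TopologicalSpace α]
    [OrderClosedTopology α] {l : Filter ι} {f : ι → α} {x c : α} (hf : Tendsto f l (𝓝 x))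
    (hx : x ≠ c) : ∀ᶠ i in l, f i ≤ c ↔ x ≤ c := by
  rcases hx.lt_or_gt with h | h
  · filter_upwards [hf.eventually_lt_const h] with i hi using iff_of_true hi.le h.le
  · filter_upwards [hf.eventually_const_lt h] with i hi using iff_of_false hi.not_ge h.not_ge

theorem eventually_sq_le_capDistSq_iff {a s s' y y' τ : ℝ} (h : Gfun a (s, s', y, y', τ) ≠ 1) :
    ∀ᶠ ε in 𝓝[>] 0, (2 - ε) ^ 2 ≤ capDistSq a ε s s' y y' (cos (√ε * τ)) ↔
      Gfun a (s, s', y, y', τ) ≤ 1 := by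
  have hlim := (tendsto_four_sub_capDistSq_div a s s' y y' τ).add
    (tendsto_nhdsWithin_of_tendsto_nhds tendsto_id)
  have hne : 4 * Gfun a (s, s', y, y', τ) + 0 ≠ 4 := by
    simpa using h
  filter_upwards [self_mem_nhdsWithin, eventually_le_const_iff_of_tendsto_of_ne hlim hne]
    with ε (hε : 0 < ε) hiff
  rw [id, add_zero, mul_le_iff_le_one_right four_pos, ← le_sub_iff_add_le, div_le_iff₀ hε] at hiff
  rw [← hiff, sub_le_comm]
  ring_nf

theorem eventually_mem_rescaledFar_iff {a : ℝ} {p : ℝ × ℝ × ℝ × ℝ × ℝ} (hp : Gfun a p ≠ 1) :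
    ∀ᶠ ε in 𝓝[>] 0, p ∈ rescaledFar a ε ↔ p ∈ {p ∈ Aset | Gfun a p ≤ 1} := by
  obtain ⟨s, s', y, y', τ⟩ := p
  have hcont : Continuous fun ε : ℝ ↦ √ε * τ := by fun_prop
  have hangle : ∀ᶠ ε in 𝓝[>] 0, √ε * τ ∈ Ioo (-π) π :=
    hcont.continuousWithinAt.eventually_mem <| by
      simpa using Ioo_mem_nhds (neg_lt_zero.2 pi_pos) pi_pos
  have hdepth (t : ℝ) : ∀ᶠ ε in 𝓝[>] 0, t < ε⁻¹ := tendsto_inv_nhdsGT_zero.eventually_gt_atTop t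
  filter_upwards [hdepth s, hdepth s', hangle, eventually_sq_le_capDistSq_iff hp]
    with ε hs hs' hτ hdist
  have hfar : (s, s', y, y', τ) ∈ rescaledFar a ε ↔
      y ^ 2 ≤ s ∧ y' ^ 2 ≤ s' ∧ (2 - ε) ^ 2 ≤ capDistSq a ε s s' y y' (cos (√ε * τ)) :=
    and_iff_left ⟨hs, hs', trivial, trivial, hτ⟩
  rw [hfar, hdist]
  constructor
  · rintro ⟨hy, hy', hG⟩
    exact ⟨⟨(sq_nonneg y).trans hy, (sq_nonneg y').trans hy', hy, hy'⟩, hG⟩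
  · rintro ⟨⟨-, -, hy, hy'⟩, hG⟩
    exact ⟨hy, hy', hG⟩

end Limits

section Domination

/-- A bounded region that contains `rescaledFar a ε` for all small positive `ε`. -/
noncomputable def rescaledBox (a : ℝ) : Set (ℝ × ℝ × ℝ × ℝ × ℝ) :=
  Icc 0 (2 / (1 - a ^ 2)) ×ˢ Icc 0 (2 / (1 - a ^ 2)) ×ˢ
    Icc (-√(2 / (1 - a ^ 2))) √(2 / (1 - a ^ 2)) ×ˢ
    Icc (-√(2 / (1 - a ^ 2))) √(2 / (1 - a ^ 2)) ×ˢ Icc (-(2 * π)) (2 * π)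

theorem measurableSet_rescaledBox (a : ℝ) : MeasurableSet (rescaledBox a) :=
  measurableSet_Icc.prod <| measurableSet_Icc.prod <| measurableSet_Icc.prod <|
    measurableSet_Icc.prod measurableSet_Icc

theorem volume_rescaledBox_ne_top (a : ℝ) : volume (rescaledBox a) ≠ ∞ :=
  (isCompact_Icc.prod <| isCompact_Icc.prod <| isCompact_Icc.prod <|
    isCompact_Icc.prod isCompact_Icc).measure_ne_top

theorem two_div_pi_sq_mul_le_one_sub_cos_sqrt {ε τ : ℝ} (hε : 0 ≤ ε) (hτ : |√ε * τ| ≤ π) :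
    2 / π ^ 2 * (ε * τ ^ 2) ≤ 1 - cos (√ε * τ) := by
  have h := cos_le_one_sub_mul_cos_sq hτ
  rw [mul_pow, Real.sq_sqrt hε] at h
  exact le_sub_comm.1 h

theorem capDistSq_le {ε s s' y y' : ℝ} (hε : 0 ≤ ε) (hs : ε * s ≤ 1) (hs' : ε * s' ≤ 1)
    (hy : y ^ 2 ≤ s) (hy' : y' ^ 2 ≤ s') (a c : ℝ) :
    capDistSq a ε s s' y y' c ≤ 4 - 2 * ε * ((1 - a ^ 2) * (s + s')) -
      2 * (√(1 - ε * s) * √(1 - ε * s') * (1 - c)) := by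
  have hroots : 2 * √(1 - ε * s) * √(1 - ε * s') ≤ (1 - ε * s) + (1 - ε * s') := by
    simpa only [Real.sq_sqrt (sub_nonneg.2 hs), Real.sq_sqrt (sub_nonneg.2 hs')] using
      two_mul_le_add_sq √(1 - ε * s) √(1 - ε * s')
  have hheights : (y - y') ^ 2 ≤ 2 * (s + s') := by linarith [sq_nonneg (y + y')]
  have hheight : a ^ 2 * ε * (y - y') ^ 2 ≤ a ^ 2 * ε * (2 * (s + s')) := by gcongr
  rw [capDistSq]
  linarith

theorem add_le_two_of_mem_rescaledFar {a ε s s' y y' τ : ℝ} (hε : 0 < ε)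
    (hp : (s, s', y, y', τ) ∈ rescaledFar a ε) :
    (1 - a ^ 2) * (s + s') + √(1 - ε * s) * √(1 - ε * s') * (2 / π ^ 2 * τ ^ 2) ≤ 2 := by
  obtain ⟨⟨hy, hy', hdist⟩, hs, hs', -, -, hτ⟩ := hp
  have hle := capDistSq_le hε.le (mul_lt_one_of_mem_Iio_inv hε hs).le
    (mul_lt_one_of_mem_Iio_inv hε hs').le hy hy' a (cos (√ε * τ))
  have hcos : √(1 - ε * s) * √(1 - ε * s') * (2 / π ^ 2 * (ε * τ ^ 2)) ≤
      √(1 - ε * s) * √(1 - ε * s') * (1 - cos (√ε * τ)) := by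
    gcongr
    exact two_div_pi_sq_mul_le_one_sub_cos_sqrt hε.le (abs_le.2 ⟨hτ.1.le, hτ.2.le⟩)
  refine le_of_mul_le_mul_left ?_ hε
  dsimp only at hdist
  linarith [sq_nonneg ε]

theorem half_le_sqrt_mul_sqrt {x y : ℝ} (hx : 1 / 2 ≤ x) (hy : 1 / 2 ≤ y) : 1 / 2 ≤ √x * √y :=
  calc (1 / 2 : ℝ) = √(1 / 2) * √(1 / 2) := (Real.mul_self_sqrt one_half_pos.le).symm
    _ ≤ √x * √y := by gcongr

theorem rescaledFar_subset_rescaledBox {a ε : ℝ} (ha : a ^ 2 < 1) (hε : 0 < ε)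
    (hsmall : ε * (2 / (1 - a ^ 2)) ≤ 1 / 2) : rescaledFar a ε ⊆ rescaledBox a := by
  rintro ⟨s, s', y, y', τ⟩ hp
  have hmain := add_le_two_of_mem_rescaledFar hε hp
  obtain ⟨⟨hy, hy', -⟩, -⟩ := hp
  dsimp only at hy hy'
  have ha' : 0 < 1 - a ^ 2 := sub_pos.2 ha
  have hs0 : 0 ≤ s := (sq_nonneg y).trans hy
  have hs0' : 0 ≤ s' := (sq_nonneg y').trans hy'
  have hsum : s + s' ≤ 2 / (1 - a ^ 2) := by
    rw [le_div_iff₀' ha']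
    exact (le_add_of_nonneg_right (by positivity)).trans hmain
  have hs : s ≤ 2 / (1 - a ^ 2) := by linarith
  have hs' : s' ≤ 2 / (1 - a ^ 2) := by linarith
  have hroots : 1 / 2 ≤ √(1 - ε * s) * √(1 - ε * s') :=
    half_le_sqrt_mul_sqrt (by nlinarith) (by nlinarith)
  have hτ : τ ^ 2 ≤ (2 * π) ^ 2 := by
    have hle : 1 / 2 * (2 / π ^ 2 * τ ^ 2) ≤ 2 :=
      calc 1 / 2 * (2 / π ^ 2 * τ ^ 2)
          ≤ √(1 - ε * s) * √(1 - ε * s') * (2 / π ^ 2 * τ ^ 2) := by gcongr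
        _ ≤ (1 - a ^ 2) * (s + s') + √(1 - ε * s) * √(1 - ε * s') * (2 / π ^ 2 * τ ^ 2) :=
          le_add_of_nonneg_left (by positivity)
        _ ≤ 2 := hmain
    field_simp at hle
    linarith [sq_nonneg π]
  exact ⟨⟨hs0, hs⟩, ⟨hs0', hs'⟩, abs_le.1 (Real.abs_le_sqrt (hy.trans hs)),
    abs_le.1 (Real.abs_le_sqrt (hy'.trans hs')), abs_le.1 (abs_le_of_sq_le_sq hτ (by positivity))⟩

theorem eventually_rescaledFar_subset_rescaledBox {a : ℝ} (ha : a ^ 2 < 1) :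
    ∀ᶠ ε in 𝓝[>] 0, rescaledFar a ε ⊆ rescaledBox a := by
  have hcont : Continuous fun ε : ℝ ↦ ε * (2 / (1 - a ^ 2)) := by fun_prop
  have hlim : Tendsto (fun ε : ℝ ↦ ε * (2 / (1 - a ^ 2))) (𝓝[>] 0) (𝓝 0) := by
    simpa using hcont.continuousWithinAt.tendsto (x := 0) (s := Ioi 0)
  filter_upwards [self_mem_nhdsWithin, hlim.eventually_le_const one_half_pos] with ε hε hsmall
    using rescaledFar_subset_rescaledBox ha hε hsmall

theorem measurable_Gfun (a : ℝ) : Measurable (Gfun a) := by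
  unfold Gfun
  fun_prop

theorem measurableSet_setOf_Gfun_le_one (a : ℝ) : MeasurableSet {p ∈ Aset | Gfun a p ≤ 1} := by
  have hAset : MeasurableSet Aset := by
    simp only [Aset, ofPred_and]
    refine .inter ?_ (.inter ?_ (.inter ?_ ?_)) <;>
      exact measurableSet_le (by fun_prop) (by fun_prop)
  exact hAset.inter (measurableSet_le (measurable_Gfun a) measurable_const)

theorem ae_Gfun_ne_one (a : ℝ) : ∀ᵐ p : ℝ × ℝ × ℝ × ℝ × ℝ, Gfun a p ≠ 1 := by
  have hlevel : MeasurableSet {p | Gfun a p = 1} := measurable_Gfun a (measurableSet_singleton 1)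
  have hfiber (q : ℝ × ℝ × ℝ × ℝ) : {s | Gfun a (s, q) = 1}.Subsingleton := by
    intro s hs t ht
    simp only [mem_ofPred_eq, Gfun] at hs ht
    linarith
  simp only [ae_iff, not_not]
  rw [Measure.volume_eq_prod, Measure.prod_apply_symm hlevel]
  exact lintegral_eq_zero_of_ae_eq_zero (.of_forall fun q ↦ (hfiber q).measure_zero volume)

theorem tendsto_volume_rescaledFar {a : ℝ} (ha : a ^ 2 < 1) :
    Tendsto (fun ε ↦ volume (rescaledFar a ε)) (𝓝[>] 0)
      (𝓝 (volume {p ∈ Aset | Gfun a p ≤ 1})) :=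
  tendsto_measure_of_ae_tendsto_indicator _ (measurableSet_setOf_Gfun_le_one a)
    (measurableSet_rescaledFar a) (measurableSet_rescaledBox a) (volume_rescaledBox_ne_top a)
    (eventually_rescaledFar_subset_rescaledBox ha)
    ((ae_Gfun_ne_one a).mono fun _ hp ↦ eventually_mem_rescaledFar_iff hp)

theorem volume_setOf_Gfun_le_one_ne_top {a : ℝ} (ha : a ^ 2 < 1) :
    volume {p ∈ Aset | Gfun a p ≤ 1} ≠ ∞ :=
  ne_top_of_le_ne_top (volume_rescaledBox_ne_top a) <| le_of_tendsto (tendsto_volume_rescaledFar ha)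
    ((eventually_rescaledFar_subset_rescaledBox ha).mono fun _ h ↦ measure_mono h)

theorem tendsto_volume_real_rescaledFar {a : ℝ} (ha : a ^ 2 < 1) :
    Tendsto (fun ε ↦ volume.real (rescaledFar a ε)) (𝓝[>] 0)
      (𝓝 (volume.real {p ∈ Aset | Gfun a p ≤ 1})) :=
  (ENNReal.tendsto_toReal (volume_setOf_Gfun_le_one_ne_top ha)).comp (tendsto_volume_rescaledFar ha)

end Domination

section UniformPairs

theorem volume_Ell {a : ℝ} (ha : 0 < a) : volume (Ell a) = ENNReal.ofReal (4 / 3 * π * a) := by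
  have hdet : LinearMap.det (Matrix.toLpLin 2 2 (Matrix.diagonal ![1, 1, a⁻¹])) = a⁻¹ := by
    simp [LinearMap.det_toLpLin, Matrix.det_diagonal, Fin.prod_univ_three]
  have hball : Ell a =
      Matrix.toLpLin 2 2 (Matrix.diagonal ![1, 1, a⁻¹]) ⁻¹' Metric.closedBall 0 1 := by
    ext x
    simp [Ell, EuclideanSpace.norm_eq, Fin.sum_univ_three, Matrix.mulVec_diagonal, mul_pow,
      div_eq_inv_mul]
  rw [hball, Measure.addHaar_preimage_linearMap _ (by simp [hdet, ha.ne']), hdet, inv_inv,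
    abs_of_pos ha, EuclideanSpace.volume_closedBall_fin_three, ENNReal.ofReal_one, one_pow, one_mul,
    ← ENNReal.ofReal_mul ha.le]
  congr 1
  ring

theorem unifE_prod_unifE_apply (a : ℝ)
    {S : Set (EuclideanSpace ℝ (Fin 3) × EuclideanSpace ℝ (Fin 3))} (hS : MeasurableSet S) :
    (unifE a).prod (unifE a) S =
      (volume (Ell a))⁻¹ * ((volume (Ell a))⁻¹ * volume (Ell a ×ˢ Ell a ∩ S)) := by
  rw [unifE, Measure.prod_smul_left, Measure.prod_smul_right, Measure.smul_apply,
    Measure.smul_apply, Measure.prod_restrict, Measure.restrict_apply hS, inter_comm,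
    smul_eq_mul, smul_eq_mul, Measure.volume_eq_prod]

theorem unifE_prod_unifE_real_setOf_two_sub_norm_sub_le {a ε : ℝ} (ha : 0 < a) (hε : 0 < ε)
    (hε2 : ε ≤ 2) :
    ((unifE a).prod (unifE a)).real {q | 2 - ‖q.1 - q.2‖ ≤ ε} =
      9 / (32 * π) * ε ^ (7 / 2 : ℝ) * volume.real (rescaledFar a ε) := by
  rw [measureReal_def, unifE_prod_unifE_apply a (measurableSet_setOf_two_sub_norm_sub_le ε),
    ← farPairs, volume_farPairs ha hε hε2, volume_Ell ha]
  simp only [ENNReal.toReal_mul, ENNReal.toReal_inv, ← measureReal_def]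
  rw [ENNReal.toReal_ofReal (by positivity), ENNReal.toReal_ofReal (by positivity)]
  field_simp
  ring

end UniformPairs

/-- Sharp two-point tail: `ε^{-7/2} P(2 - ‖X₁ - X₂‖ ≤ ε) → (9/(32π)) I_a` as `ε ↓ 0`. -/
theorem stmt15 (a : ℝ) (ha : 0 < a) (ha1 : a < 1)
    {Ω : Type*} [MeasurableSpace Ω] (P : Measure Ω) [IsProbabilityMeasure P]
    (X₁ X₂ : Ω → EuclideanSpace ℝ (Fin 3))
    (hX₁ : Measurable X₁) (hX₂ : Measurable X₂)
    (hd₁ : P.map X₁ = unifE a) (hd₂ : P.map X₂ = unifE a)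
    (hindep : IndepFun X₁ X₂ P) :
    Tendsto (fun ε : ℝ =>
        ε ^ (-(7:ℝ)/2) * (P {ω | 2 - ‖X₁ ω - X₂ ω‖ ≤ ε}).toReal)
      (nhdsWithin 0 (Set.Ioi 0))
      (nhds ((9 / (32 * π)) * (volume {p ∈ Aset | Gfun a p ≤ 1}).toReal)) := by
  have hlaw : HasLaw (fun ω ↦ (X₁ ω, X₂ ω)) ((unifE a).prod (unifE a)) P :=
    hindep.hasLaw_prod ⟨hX₁.aemeasurable, hd₁⟩ ⟨hX₂.aemeasurable, hd₂⟩
  have hprob {ε : ℝ} (hε : 0 < ε) (hε2 : ε ≤ 2) : (P {ω | 2 - ‖X₁ ω - X₂ ω‖ ≤ ε}).toReal =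
      9 / (32 * π) * ε ^ (7 / 2 : ℝ) * volume.real (rescaledFar a ε) := by
    rw [← unifE_prod_unifE_real_setOf_two_sub_norm_sub_le ha hε hε2]
    exact hlaw.measureReal_eq (measurableSet_setOf_two_sub_norm_sub_le ε)
  have ha2 : a ^ 2 < 1 := pow_lt_one₀ ha.le ha1 two_ne_zero
  refine ((tendsto_volume_real_rescaledFar ha2).const_mul (9 / (32 * π))).congr' ?_
  filter_upwards [Ioc_mem_nhdsGT (zero_lt_two' ℝ)] with ε ⟨hε, hε2⟩
  have hpow : ε ^ (-(7 : ℝ) / 2) * ε ^ (7 / 2 : ℝ) = 1 := by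
    rw [neg_div, Real.rpow_neg hε.le, inv_mul_cancel₀ (Real.rpow_pos_of_pos hε _).ne']
  rw [hprob hε hε2, mul_comm (9 / (32 * π)) (ε ^ _), mul_assoc, ← mul_assoc, hpow, one_mul]
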